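/- Assume 0 < α < β = δ. Let x ∈ K with ‖x − x₀‖ = r. Then: (i) if α < r < β, then ‖f(x) − x₀‖ = r, i.e. every sphere S_r(x₀) with α < r < β is invariant under f; (ii) if r > β, then ‖f(x) − x₀‖ = β, i.e. f maps every sphere S_r(x₀) with r > β into S_β(x₀). -/

import Mathlib

/-! Put `y = x - x₀`, `u = x₀ - x₁`, `v = x₀ - x₂`. Then `(2a + d)/3 = u + v` and, away from the poles,
`f x - x₀ = y * ((u + v) * y + u * v) / ((y + u) * (y + v))`.
In both regimes each of the three sums involved has a strictly dominant term, so the ultrametric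
inequality determines its norm: `‖(u + v) * y + u * v‖ = β r` and `‖y + u‖ = r` since `r > α`, while
`‖y + v‖` is `β` or `r` according as `r < β` or `r > β`. -/

lemma norm_add_of_norm_lt {K : Type*} [NormedField K] [IsUltrametricDist K] {s t : K}
    (h : ‖t‖ < ‖s‖) : ‖s + t‖ = ‖s‖ := by
  rw [IsUltrametricDist.norm_add_eq_max_of_norm_ne_norm h.ne', max_eq_left h.le]

/-- The map in coordinates centred at its fixed point `x₀`, with the denominator factored. -/
lemma sub_fixed_eq {K : Type*} [NormedField K] [CharZero K] {a b d x₀ x₁ x₂ x : K}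
    (hx₀ : x₀ = (a - d) / 3) (hsum : x₁ + x₂ = -d) (hprod : x₁ * x₂ = (a - d) ^ 2 / 3 + b)
    (h₁ : (x - x₀) + (x₀ - x₁) ≠ 0) (h₂ : (x - x₀) + (x₀ - x₂) ≠ 0) :
    (a * x ^ 2 + b * x + ((a - d) / 3) ^ 3) / (x ^ 2 + d * x + (a - d) ^ 2 / 3 + b) - x₀ =
      (x - x₀) * ((2 * a + d) / 3 * (x - x₀) + (x₀ - x₁) * (x₀ - x₂)) /
        (((x - x₀) + (x₀ - x₁)) * ((x - x₀) + (x₀ - x₂))) := by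
  obtain rfl : a = d + 3 * x₀ := by rw [hx₀]; ring
  obtain rfl : d = -(x₁ + x₂) := by rw [hsum]; ring
  obtain rfl : b = x₁ * x₂ - 3 * x₀ ^ 2 := by rw [hprod]; ring
  have hden : x ^ 2 + -(x₁ + x₂) * x + (-(x₁ + x₂) + 3 * x₀ - -(x₁ + x₂)) ^ 2 / 3 +
      (x₁ * x₂ - 3 * x₀ ^ 2) = ((x - x₀) + (x₀ - x₁)) * ((x - x₀) + (x₀ - x₂)) := by ring
  rw [hden, div_sub' (mul_ne_zero h₁ h₂)]
  congr 1
  ring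


/-- Theorem 9, parts 1.2 and 4: assume `0 < α < β = δ` and
`‖x − x₀‖ = r`. (i) If `α < r < β` then `‖f(x) − x₀‖ = r` (the sphere `S_r(x₀)` is
invariant); (ii) if `r > β` then `‖f(x) − x₀‖ = β`. -/
theorem stmt_14 {K : Type*} [NormedField K] [IsUltrametricDist K] [CharZero K]
    (a b d : K) (f : K → K)
    (hf : ∀ x : K, f x =
      (a * x ^ 2 + b * x + ((a - d) / 3) ^ 3) / (x ^ 2 + d * x + (a - d) ^ 2 / 3 + b))
    (x₀ x₁ x₂ : K) (hx₀ : x₀ = (a - d) / 3)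
    (hsum : x₁ + x₂ = -d) (hprod : x₁ * x₂ = (a - d) ^ 2 / 3 + b)
    (δ α β : ℝ) (hδ : δ = ‖(2 * a + d) / 3‖) (hα : α = ‖x₀ - x₁‖) (hβ : β = ‖x₀ - x₂‖)
    (hα0 : 0 < α) (hαβ : α < β) (hβδ : β = δ)
    (x : K) (r : ℝ) (hr : ‖x - x₀‖ = r) :
    (α < r → r < β → ‖f x - x₀‖ = r) ∧
    (β < r → ‖f x - x₀‖ = β) := by
  have key : α < r → ‖(x - x₀) + (x₀ - x₂)‖ ≠ 0 →
      ‖f x - x₀‖ = r * β / ‖(x - x₀) + (x₀ - x₂)‖ := by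
    intro har h₂
    have hr0 : 0 < r := hα0.trans har
    have hβ0 : 0 < β := hα0.trans hαβ
    have h₁ : ‖(x - x₀) + (x₀ - x₁)‖ = r := by
      rw [norm_add_of_norm_lt (by rw [hr, ← hα]; exact har), hr]
    have hN : ‖(2 * a + d) / 3 * (x - x₀) + (x₀ - x₁) * (x₀ - x₂)‖ = β * r := by
      rw [norm_add_of_norm_lt, norm_mul, hr, ← hδ, hβδ]
      rw [norm_mul, norm_mul, hr, ← hδ, ← hα, ← hβ, ← hβδ, mul_comm β r]
      exact mul_lt_mul_of_pos_right har hβ0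
    rw [hf, sub_fixed_eq hx₀ hsum hprod (norm_ne_zero_iff.1 (h₁ ▸ hr0.ne'))
      (norm_ne_zero_iff.1 h₂), norm_div, norm_mul, norm_mul _ (x - x₀ + (x₀ - x₂)), hN, h₁, hr]
    field_simp
  have hβ0 : 0 < β := hα0.trans hαβ
  constructor
  · intro har hrβ
    have h₂ : ‖(x - x₀) + (x₀ - x₂)‖ = β := by
      rw [add_comm, norm_add_of_norm_lt (by rw [hr, ← hβ]; exact hrβ), hβ]
    rw [key har (h₂ ▸ hβ0.ne'), h₂, mul_div_cancel_right₀ _ hβ0.ne']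
  · intro hβr
    have hr0 : 0 < r := hβ0.trans hβr
    have h₂ : ‖(x - x₀) + (x₀ - x₂)‖ = r := by
      rw [norm_add_of_norm_lt (by rw [hr, ← hβ]; exact hβr), hr]
    rw [key (hαβ.trans hβr) (h₂ ▸ hr0.ne'), h₂, mul_div_cancel_left₀ _ hr0.ne']
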